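/- Let t be a binary tree with n leaves, a ∈ ℕ^n a degree vector, and A an inner vertex of t whose descendant leaves are exactly those in positions i+1,…,i+j (for some i ≥ 0 and j ≥ 2). Then: (i) W_A = i + a_1 + ⋯ + a_i + b_A; and (ii) P(t, a) = P(t↑A, (a_{i+1},…,a_{i+j})) + P(t↓A, (a_1,…,a_i, δ, a_{i+j+1},…,a_n)) + b_A, where δ = a_{i+1} + ⋯ + a_{i+j} + j − 2, t↑A is the subtree of t rooted at A, and t↓A is t with this subtree replaced by a single leaf. -/

import Mathlib

/-- Planar rooted trees with leaves decorated by natural numbers (the degrees of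
the decorations). -/
inductive DTree : Type
  | leaf (a : ℕ) : DTree
  | node (children : List DTree) : DTree

namespace DTree

mutual
  /-- degree: sum of the leaf decorations plus the number of vertices. -/
  def deg : DTree → ℕ
    | leaf a => a
    | node cs => 1 + degList cs
  def degList : List DTree → ℕ
    | [] => 0
    | c :: rest => deg c + degList rest
end

mutual
  /-- `P(t,a)`: the sum, over all vertices `V` of `t` (root included), of the
  degrees of the decorated left (= first-child) subtrees of `V`. -/
  def Pval : DTree → ℕ
    | leaf _ => 0
    | node [] => 0
    | node (c :: rest) => deg c + Pval c + PvalList rest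
  def PvalList : List DTree → ℕ
    | [] => 0
    | c :: rest => Pval c + PvalList rest
end

mutual
  /-- the list of leaf decorations, in planar (left-to-right) order. -/
  def leafLabels : DTree → List ℕ
    | leaf a => [a]
    | node cs => leafLabelsList cs
  def leafLabelsList : List DTree → List ℕ
    | [] => []
    | c :: rest => leafLabels c ++ leafLabelsList rest
end

/-- binary trees: every vertex has exactly two children. -/
inductive IsBinary : DTree → Prop
  | leaf (a : ℕ) : IsBinary (leaf a)
  | node (t₁ t₂ : DTree) : IsBinary t₁ → IsBinary t₂ → IsBinary (node [t₁, t₂])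

/-- the subtree `t↑A` at address `p` (list of child indices from the root). -/
def subAt : DTree → List ℕ → DTree
  | t, [] => t
  | leaf a, _ :: _ => leaf a
  | node cs, i :: p => subAt (cs.getD i (leaf 0)) p

/-- validity of an address. -/
def ValidAddr : DTree → List ℕ → Prop
  | _, [] => True
  | leaf _, _ :: _ => False
  | node cs, i :: p => i < cs.length ∧ ValidAddr (cs.getD i (leaf 0)) p

/-- `t↓A` (with a prescribed replacement): replace the subtree at address `p`
by the tree `r` (below, `r` will be a single decorated leaf). -/
def replaceAt : DTree → List ℕ → DTree → DTree
  | _, [], r => r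
  | leaf a, _ :: _, _ => leaf a
  | node cs, i :: p, r => node (cs.set i (replaceAt (cs.getD i (leaf 0)) p r))

/-- The weight `W_A` of the vertex at address `p`: the number of edges of the
path `γ` from the root to `A` plus the sum of the degrees of the subtrees
hanging off the path to the left of it. -/
def weightAt : DTree → List ℕ → ℕ
  | _, [] => 0
  | leaf _, _ :: _ => 0
  | node cs, i :: p => 1 + ((cs.take i).map deg).sum + weightAt (cs.getD i (leaf 0)) p

/-- the number of leaves of `t` strictly to the left of the subtree at
address `p`. -/
def leavesBefore : DTree → List ℕ → ℕ
  | _, [] => 0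
  | leaf _, _ :: _ => 0
  | node cs, i :: p =>
      ((cs.take i).map fun c => (leafLabels c).length).sum +
        leavesBefore (cs.getD i (leaf 0)) p

end DTree

namespace DTree

theorem aux_deg {t : DTree} (ht : IsBinary t) :
    deg t + 1 = (leafLabels t).sum + (leafLabels t).length := by
  induction ht with
  | leaf a => simp [deg, leafLabels]
  | node t₁ t₂ _ _ ih₁ ih₂ =>
    simp [deg, degList, leafLabels, leafLabelsList]
    omega

theorem aux_sub {t : DTree} (ht : IsBinary t) : ∀ p, IsBinary (subAt t p) := by
  induction ht with
  | leaf a => intro p; cases p <;> exact IsBinary.leaf a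
  | node t₁ t₂ h₁ h₂ ih₁ ih₂ =>
    intro p
    match p with
    | [] => exact IsBinary.node t₁ t₂ h₁ h₂
    | 0 :: p => simpa [subAt] using ih₁ p
    | 1 :: p => simpa [subAt] using ih₂ p
    | (n+2) :: p => cases p <;> simpa [subAt] using IsBinary.leaf 0

theorem aux_lb {t : DTree} (ht : IsBinary t) : ∀ p, ValidAddr t p →
    leavesBefore t p ≤ (leafLabels t).length ∧
    weightAt t p = leavesBefore t p + ((leafLabels t).take (leavesBefore t p)).sum
      + p.count 0 := by
  induction ht with
  | leaf a => intro p; cases p <;> simp [ValidAddr, leavesBefore, weightAt]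
  | node t₁ t₂ h₁ h₂ ih₁ ih₂ =>
    intro p hv
    match p, hv with
    | [], _ => simp [leavesBefore, weightAt]
    | 0 :: p, hv =>
      simp [ValidAddr] at hv
      obtain ⟨a, b⟩ := ih₁ p hv
      simp [leavesBefore, weightAt, leafLabels, leafLabelsList, List.take_append,
        Nat.sub_eq_zero_of_le a, b]
      omega
    | 1 :: p, hv =>
      simp [ValidAddr] at hv
      obtain ⟨a, b⟩ := ih₂ p hv
      have := aux_deg h₁
      have e : (leafLabels t₁).take ((leafLabels t₁).length + leavesBefore t₂ p) = leafLabels t₁ :=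
        List.take_of_length_le (by omega)
      simp [leavesBefore, weightAt, leafLabels, leafLabelsList, List.take_append, b, e]
      omega
    | (n+2) :: p, hv => simp [ValidAddr] at hv

theorem aux_P {t : DTree} (ht : IsBinary t) : ∀ p d, ValidAddr t p →
    deg (subAt t p) = d + 1 →
    deg t = deg (replaceAt t p (leaf d)) + 1 ∧
    Pval t = Pval (subAt t p) + Pval (replaceAt t p (leaf d)) + p.count 0 := by
  induction ht with
  | leaf a => intro p d; cases p <;> simp [ValidAddr, subAt, replaceAt, deg, Pval]
  | node t₁ t₂ h₁ h₂ ih₁ ih₂ =>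
    intro p d hv hd
    match p, hv with
    | [], _ => simp_all [subAt, replaceAt, deg, Pval]
    | 0 :: p, hv =>
      simp [ValidAddr] at hv
      simp [subAt] at hd
      obtain ⟨a, b⟩ := ih₁ p d hv hd
      simp [subAt, replaceAt, deg, degList, Pval, PvalList]
      omega
    | 1 :: p, hv =>
      simp [ValidAddr] at hv
      simp [subAt] at hd
      obtain ⟨a, b⟩ := ih₂ p d hv hd
      simp [subAt, replaceAt, deg, degList, Pval, PvalList]
      omega
    | (n+2) :: p, hv => simp [ValidAddr] at hv

end DTree

/-- the weight-and-sign Lemma of Appendix A.  Let `t` be a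
binary decorated tree and `A` an inner vertex of `t`, given by a nonempty valid
address `p` pointing to a node; let `i` be the number of leaves of `t` to the
left of `A`, `j` the number of leaves descending from `A` (so the descendant
leaves of `A` are exactly those in positions `i+1, …, i+j`), `δ = a_{i+1}+⋯+a_{i+j}+j−2`
the degree of the decorated subtree at `A` minus one, and `b_A` the number of
vertices `B` of `t` such that `A` is a vertex of the left subtree of `B`
(for a binary tree with a valid address, this is the number of left turns of
the path, i.e. the number of `0`s in `p`).  Then
(i)  `W_A = i + a_1 + ⋯ + a_i + b_A`, and
(ii) `P(t,a) = P(t↑A) + P(t↓A with new leaf δ) + b_A`. -/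
theorem stmt_16 (t : DTree) (ht : DTree.IsBinary t) (p : List ℕ) (hp : p ≠ [])
    (hv : DTree.ValidAddr t p) (ds : List DTree)
    (hnode : DTree.subAt t p = DTree.node ds) :
    DTree.weightAt t p =
      DTree.leavesBefore t p +
        ((DTree.leafLabels t).take (DTree.leavesBefore t p)).sum + p.count 0 ∧
    DTree.Pval t =
      DTree.Pval (DTree.subAt t p) +
        DTree.Pval (DTree.replaceAt t p (DTree.leaf
          ((DTree.leafLabels (DTree.subAt t p)).sum +
            (DTree.leafLabels (DTree.subAt t p)).length - 2))) + p.count 0 := by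
  refine ⟨(DTree.aux_lb ht p hv).2, (DTree.aux_P ht p _ hv ?_).2⟩
  have h := DTree.aux_deg (DTree.aux_sub ht p)
  have h2 : 1 ≤ DTree.deg (DTree.subAt t p) := by
    rw [hnode]; simp [DTree.deg]
  omega
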